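/- For every integer n ≥ 3, the cycle graph C_n satisfies: rvcl(C_n) = 3 if 3 ≤ n ≤ 7; rvcl(C_n) = ⌈n/2⌉ − 1 if n ∈ {9, 15} or 11 ≤ n ≤ 13; and rvcl(C_n) = ⌈n/2⌉ if n ∈ {8, 10, 14} or n ≥ 16. -/

import Mathlib

namespace LocatingRainbow

open SimpleGraph

variable {V : Type*}

/-- The internal vertices of a walk: its support without the endpoints. -/
def internalVertices {G : SimpleGraph V} {u v : V} (p : G.Walk u v) : List V :=
  p.support.tail.dropLast

/-- `c` is a rainbow vertex coloring of `G` (with colors in `Fin k`) if any two distinct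
vertices are joined by a path whose internal vertices have pairwise distinct colors. -/
def IsRainbowVertexColoring (G : SimpleGraph V) {k : ℕ} (c : V → Fin k) : Prop :=
  ∀ u v : V, u ≠ v → ∃ p : G.Walk u v, p.IsPath ∧ ((internalVertices p).map c).Nodup

/-- The distance from a vertex `v` to the color class of the color `i`. -/
noncomputable def distToColor (G : SimpleGraph V) {k : ℕ} (c : V → Fin k) (v : V) (i : Fin k) :
    ℕ :=
  sInf {m | ∃ y, c y = i ∧ G.dist v y = m}

/-- The rainbow code of a vertex `v`: the vector of distances to all color classes. -/
noncomputable def rainbowCode (G : SimpleGraph V) {k : ℕ} (c : V → Fin k) (v : V) :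
    Fin k → ℕ :=
  fun i => distToColor G c v i

/-- `c` is a locating rainbow coloring if it is a rainbow vertex coloring and distinct
vertices have distinct rainbow codes. -/
def IsLocatingRainbowColoring (G : SimpleGraph V) {k : ℕ} (c : V → Fin k) : Prop :=
  IsRainbowVertexColoring G c ∧ Function.Injective (rainbowCode G c)

/-- The rainbow vertex connection number of `G`. -/
noncomputable def rvc (G : SimpleGraph V) : ℕ :=
  sInf {k | ∃ c : V → Fin k, IsRainbowVertexColoring G c}

/-- The locating rainbow connection number of `G`. -/
noncomputable def rvcl (G : SimpleGraph V) : ℕ :=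
  sInf {k | ∃ c : V → Fin k, IsLocatingRainbowColoring G c}

end LocatingRainbow

namespace LocatingRainbow

open SimpleGraph

theorem adj_iff {n : ℕ} (hn : 3 ≤ n) (u v : Fin n) :
    (cycleGraph n).Adj u v ↔ u.val + 1 = v.val ∨ v.val + 1 = u.val ∨
      (u.val = 0 ∧ v.val + 1 = n) ∨ (v.val = 0 ∧ u.val + 1 = n) := by
  rw [cycleGraph_adj', Fin.sub_def, Fin.sub_def]
  have hu := u.isLt
  have hv := v.isLt
  simp only
  rcases lt_or_ge u.val v.val with h | h
  · rw [Nat.mod_eq_of_lt (a := n - v.val + u.val) (by omega)]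
    have : n - u.val + v.val = n + (v.val - u.val) := by omega
    rw [this, Nat.add_mod_left, Nat.mod_eq_of_lt (by omega)]
    omega
  · have : n - v.val + u.val = n + (u.val - v.val) := by omega
    rw [this, Nat.add_mod_left, Nat.mod_eq_of_lt (a := u.val - v.val) (by omega)]
    rcases eq_or_lt_of_le h with h' | h'
    · have : n - u.val + v.val = n := by omega
      rw [this, Nat.mod_self]
      omega
    · rw [Nat.mod_eq_of_lt (by omega)]
      omega

/-- Cyclic distance. -/
def cd (n a b : ℕ) : ℕ := min (max a b - min a b) (n - (max a b - min a b))

theorem support_eq {V : Type*} {G : SimpleGraph V} {u v : V} (p : G.Walk u v) (h : u ≠ v) :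
    p.support = u :: (internalVertices p ++ [v]) := by
  cases p with
  | nil => exact absurd rfl h
  | cons hadj q =>
    simp only [internalVertices, Walk.support_cons, List.tail_cons, List.cons.injEq, true_and]
    have h1 := List.dropLast_append_getLast (Walk.support_ne_nil q)
    rw [Walk.getLast_support] at h1
    exact h1.symm

/-- The arc condition equivalent to being a rainbow coloring of the cycle. -/
def Rain {n k : ℕ} (c : Fin n → Fin k) : Prop :=
  ∀ u v : Fin n, u < v →
    (∀ x y : Fin n, u < x → x < v → u < y → y < v → c x = c y → x = y) ∨
    (∀ x y : Fin n, (x < u ∨ v < x) → (y < u ∨ v < y) → c x = c y → x = y)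

theorem walk_stays {n : ℕ} {a b : Fin n} (p : (cycleGraph n).Walk a b)
    (S : Fin n → Prop) (x y : Fin n)
    (hS : ∀ w w', (cycleGraph n).Adj w w' → S w → w' ≠ x → w' ≠ y → S w')
    (hx : x ∉ p.support) (hy : y ∉ p.support) (ha : S a) : S b := by
  induction p with
  | nil => exact ha
  | @cons u v w hadj q ih =>
    simp only [Walk.support_cons, List.mem_cons, not_or] at hx hy
    refine ih hx.2 hy.2 (hS _ _ hadj ha ?_ ?_)
    · rintro rfl; exact hx.2 q.start_mem_support
    · rintro rfl; exact hy.2 q.start_mem_support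

theorem walk_hits {n : ℕ} (hn : 3 ≤ n) {u v : Fin n} (huv : u < v)
    (p : (cycleGraph n).Walk u v) (x y : Fin n) (h1 : u < x) (h2 : x < v)
    (h3 : y < u ∨ v < y) : x ∈ p.support ∨ y ∈ p.support := by
  by_contra! hcon
  rw [Fin.lt_def] at *
  rcases h3 with h3 | h3
  · have := walk_stays p (fun w => y.val < w.val ∧ w.val < x.val) x y (by
      intro w w' hadj hw hne hne'
      rw [adj_iff hn] at hadj
      rw [Ne, Fin.ext_iff] at hne hne'
      have := w.isLt
      have := w'.isLt
      have := x.isLt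
      have := y.isLt
      omega) hcon.1 hcon.2 ⟨by omega, by omega⟩
    omega
  · rw [Fin.lt_def] at h3
    have := walk_stays p (fun w => y.val < w.val ∨ w.val < x.val) x y (by
      intro w w' hadj hw hne hne'
      rw [adj_iff hn] at hadj
      rw [Ne, Fin.ext_iff] at hne hne'
      have := w.isLt
      have := w'.isLt
      have := x.isLt
      have := y.isLt
      omega) hcon.1 hcon.2 (by omega)
    omega

theorem rain_of_rainbow {n k : ℕ} (hn : 3 ≤ n) {c : Fin n → Fin k}
    (h : IsRainbowVertexColoring (cycleGraph n) c) : Rain c := by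
  intro u v huv
  obtain ⟨p, hp, hnd⟩ := h u v huv.ne
  have hs := support_eq p huv.ne
  have hinj := List.inj_on_of_nodup_map hnd
  have hint : ∀ x, x ∈ p.support → x ≠ u → x ≠ v → x ∈ internalVertices p := by
    intro x hx h1 h2
    rw [hs] at hx
    simpa [h1, h2] using hx
  by_cases hall : ∀ x, u < x → x < v → x ∈ p.support
  · left
    intro x y hx1 hx2 hy1 hy2 hc
    exact hinj (hint x (hall x hx1 hx2) hx1.ne' hx2.ne) (hint y (hall y hy1 hy2) hy1.ne' hy2.ne) hc
  · right
    push Not at hall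
    obtain ⟨z, hz1, hz2, hz3⟩ := hall
    have key : ∀ y, (y < u ∨ v < y) → y ∈ internalVertices p := by
      intro y hy
      refine hint y ((walk_hits hn huv p z y hz1 hz2 hy).resolve_left hz3) ?_ ?_
      · rintro rfl
        rcases hy with hy | hy
        · exact lt_irrefl _ hy
        · exact lt_asymm hy huv
      · rintro rfl
        rcases hy with hy | hy
        · exact lt_asymm hy huv
        · exact lt_irrefl _ hy
    intro x y hx hy hc
    exact hinj (key x hx) (key y hy) hc

/-- The vertex of the cycle with index `a` modulo `n`. -/
def vx (n : ℕ) (hn : 3 ≤ n) (a : ℕ) : Fin n := ⟨a % n, Nat.mod_lt _ (by omega)⟩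

theorem vx_adj (n : ℕ) (hn : 3 ≤ n) (a : ℕ) :
    (cycleGraph n).Adj (vx n hn a) (vx n hn (a + 1)) := by
  rw [adj_iff hn]
  simp only [vx]
  rw [Nat.add_mod, Nat.mod_eq_of_lt (a := 1) (by omega)]
  have : a % n < n := Nat.mod_lt _ (by omega)
  rcases Nat.lt_or_ge (a % n + 1) n with h | h
  · rw [Nat.mod_eq_of_lt h]; omega
  · have : a % n + 1 = n := by omega
    rw [this, Nat.mod_self]; omega

theorem arc_walk (n : ℕ) (hn : 3 ≤ n) (t : ℕ) : ∀ a : ℕ,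
    ∃ p : (cycleGraph n).Walk (vx n hn a) (vx n hn (a + t)),
      p.support = (List.range' a (t + 1)).map (vx n hn) ∧ p.length = t := by
  induction t with
  | zero => intro a; exact ⟨Walk.nil, by simp, rfl⟩
  | succ t ih =>
    intro a
    obtain ⟨p, hp, hl⟩ := ih (a + 1)
    have e : a + 1 + t = a + (t + 1) := by omega
    refine ⟨Walk.cons (vx_adj n hn a) (p.copy rfl (by rw [e])), ?_, ?_⟩
    · rw [Walk.support_cons, Walk.support_copy, hp, List.range'_succ (n := t + 1)]
      simp
    · simp [hl]

theorem vx_inj {n : ℕ} (hn : 3 ≤ n) {a x y : ℕ} (hx : a ≤ x) (hx' : x < a + n) (hy : a ≤ y)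
    (hy' : y < a + n) (h : vx n hn x = vx n hn y) : x = y := by
  simp only [vx, Fin.mk.injEq] at h
  wlog hxy : x ≤ y generalizing x y
  · exact (this hy hy' hx hx' h.symm (by omega)).symm
  have h2 : n ∣ y - x := (Nat.modEq_iff_dvd' hxy).mp h
  have := Nat.eq_zero_of_dvd_of_lt h2 (by omega)
  omega

theorem arc_path (n : ℕ) (hn : 3 ≤ n) {k : ℕ} (c : Fin n → Fin k) (a t : ℕ) (ht : t + 1 < n)
    (hc : ∀ x y, a < x → x ≤ a + t → a < y → y ≤ a + t →
      c (vx n hn x) = c (vx n hn y) → x = y) :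
    ∃ p : (cycleGraph n).Walk (vx n hn a) (vx n hn (a + (t + 1))),
      p.IsPath ∧ ((internalVertices p).map c).Nodup := by
  obtain ⟨p, hp, -⟩ := arc_walk n hn (t + 1) a
  refine ⟨p, ?_, ?_⟩
  · rw [Walk.isPath_def, hp]
    refine List.Nodup.map_on ?_ (List.nodup_range')
    intro x hx y hy hxy
    rw [List.mem_range'_1] at hx hy
    exact vx_inj hn (a := a) (by omega) (by omega) (by omega) (by omega) hxy
  · have : internalVertices p = (List.range' (a + 1) t).map (vx n hn) := by
      rw [internalVertices, hp, List.range'_succ, List.map_cons, List.tail_cons,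
        ← List.map_dropLast, List.range'_concat, List.dropLast_concat]
    rw [this, List.map_map]
    refine List.Nodup.map_on ?_ (List.nodup_range')
    intro x hx y hy hxy
    rw [List.mem_range'_1] at hx hy
    exact hc x y (by omega) (by omega) (by omega) (by omega) hxy

theorem vx_val {n : ℕ} (hn : 3 ≤ n) (v : Fin n) : vx n hn v.val = v := by
  ext; simp [vx, Nat.mod_eq_of_lt v.isLt]

theorem vx_val_add {n : ℕ} (hn : 3 ≤ n) (v : Fin n) : vx n hn (n + v.val) = v := by
  ext; simp [vx, Nat.mod_eq_of_lt v.isLt]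

theorem path_symm {V : Type*} {G : SimpleGraph V} {k : ℕ} (c : V → Fin k) {u v : V}
    (h : ∃ p : G.Walk u v, p.IsPath ∧ ((internalVertices p).map c).Nodup) :
    ∃ p : G.Walk v u, p.IsPath ∧ ((internalVertices p).map c).Nodup := by
  obtain ⟨p, hp, hnd⟩ := h
  refine ⟨p.reverse, hp.reverse, ?_⟩
  have : internalVertices p.reverse = (internalVertices p).reverse := by
    simp [internalVertices, Walk.support_reverse, List.tail_reverse, List.dropLast_reverse,
      List.tail_dropLast]
  rw [this, List.map_reverse, List.nodup_reverse]
  exact hnd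

theorem rainbow_of_rain {n k : ℕ} (hn : 3 ≤ n) {c : Fin n → Fin k}
    (h : Rain c) : IsRainbowVertexColoring (cycleGraph n) c := by
  have main : ∀ u v : Fin n, u < v →
      ∃ p : (cycleGraph n).Walk u v, p.IsPath ∧ ((internalVertices p).map c).Nodup := by
    intro u v huv
    have hv := v.isLt
    have huv' : u.val < v.val := huv
    rcases h u v huv with h1 | h1
    · obtain ⟨t, ht⟩ : ∃ t, v.val = u.val + (t + 1) := ⟨v.val - u.val - 1, by omega⟩
      have := arc_path n hn c u.val t (by omega) (by
        intro x y hx hx' hy hy' hxy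
        have ex : vx n hn x = ⟨x, by omega⟩ := vx_val hn ⟨x, by omega⟩
        have ey : vx n hn y = ⟨y, by omega⟩ := vx_val hn ⟨y, by omega⟩
        rw [ex, ey] at hxy
        have := h1 ⟨x, by omega⟩ ⟨y, by omega⟩ hx (by rw [Fin.lt_def]; dsimp only; omega) hy
          (by rw [Fin.lt_def]; dsimp only; omega) hxy
        simpa using this)
      rw [← ht, vx_val, vx_val] at this
      exact this
    · apply path_symm
      obtain ⟨t, ht⟩ : ∃ t, n + u.val = v.val + (t + 1) := ⟨n + u.val - v.val - 1, by omega⟩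
      have := arc_path n hn c v.val t (by omega) (by
        intro x y hx hx' hy hy' hxy
        have key : ∀ x, v.val < x → x ≤ v.val + t → (vx n hn x < u ∨ v < vx n hn x) := by
          intro x h2 h3
          rw [Fin.lt_def, Fin.lt_def]
          simp only [vx]
          rcases Nat.lt_or_ge x n with h4 | h4
          · rw [Nat.mod_eq_of_lt h4]; omega
          · rw [Nat.mod_eq_sub_mod h4, Nat.mod_eq_of_lt (by omega)]; omega
        exact vx_inj hn (a := v.val) (by omega) (by omega) (by omega) (by omega)
          (h1 _ _ (key x hx hx') (key y hy hy') hxy))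
      rw [← ht, vx_val, vx_val_add] at this
      exact this
  intro u v huv
  rcases lt_or_gt_of_ne huv with h1 | h1
  · exact main u v h1
  · exact path_symm c (main v u h1)

theorem rainbow_iff {n k : ℕ} (hn : 3 ≤ n) (c : Fin n → Fin k) :
    IsRainbowVertexColoring (cycleGraph n) c ↔ Rain c :=
  ⟨rain_of_rainbow hn, rainbow_of_rain hn⟩

theorem cd_le_length {n : ℕ} (hn : 3 ≤ n) {u v : Fin n} (p : (cycleGraph n).Walk u v) :
    cd n u.val v.val ≤ p.length := by
  induction p with
  | nil => simp [cd]
  | @cons u v w hadj q ih =>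
    rw [adj_iff hn] at hadj
    rw [Walk.length_cons]
    have := u.isLt
    have := v.isLt
    have := w.isLt
    unfold cd at *
    omega

theorem dist_eq {n : ℕ} (hn : 3 ≤ n) (u v : Fin n) :
    (cycleGraph n).dist u v = cd n u.val v.val := by
  have main : ∀ u v : Fin n, u ≤ v → (cycleGraph n).dist u v ≤ cd n u.val v.val := by
    intro u v huv
    have huv' : u.val ≤ v.val := huv
    have hv := v.isLt
    obtain ⟨p, -, hp⟩ := arc_walk n hn (v.val - u.val) u.val
    obtain ⟨q, -, hq⟩ := arc_walk n hn (n + u.val - v.val) v.val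
    have h1 := dist_le p
    have h2 := dist_le q
    rw [hp, show u.val + (v.val - u.val) = v.val by omega, vx_val, vx_val] at h1
    rw [hq, show v.val + (n + u.val - v.val) = n + u.val by omega, vx_val, vx_val_add,
      SimpleGraph.dist_comm] at h2
    unfold cd
    omega
  apply le_antisymm
  · rcases le_total u v with h | h
    · exact main u v h
    · rw [SimpleGraph.dist_comm]
      refine (main v u h).trans ?_
      unfold cd
      omega
  · have hconn : (cycleGraph n).Reachable u v := cycleGraph_preconnected u v
    obtain ⟨p, hp⟩ := hconn.exists_walk_length_eq_dist
    rw [← hp]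
    exact cd_le_length hn p

theorem inside_card {n k : ℕ} (c : Fin n → Fin k) (u v : Fin n)
    (h : ∀ x y : Fin n, u < x → x < v → u < y → y < v → c x = c y → x = y) :
    v.val - u.val - 1 ≤ k := by
  have hv := v.isLt
  have := Fintype.card_le_of_injective
    (fun i : Fin (v.val - u.val - 1) => c ⟨u.val + 1 + i.val, by omega⟩) (by
      intro i j hij
      have := h _ _ (by rw [Fin.lt_def]; dsimp only; omega) (by rw [Fin.lt_def]; dsimp only; omega)
        (by rw [Fin.lt_def]; dsimp only; omega) (by rw [Fin.lt_def]; dsimp only; omega) hij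
      rw [Fin.mk.injEq] at this
      ext
      omega)
  simpa using this

theorem outside_card {n k : ℕ} (c : Fin n → Fin k) (u v : Fin n) (huv : u < v)
    (h : ∀ x y : Fin n, (x < u ∨ v < x) → (y < u ∨ v < y) → c x = c y → x = y) :
    u.val + (n - 1 - v.val) ≤ k := by
  have hv := v.isLt
  have huv' : u.val < v.val := huv
  have key : ∀ i : Fin (u.val + (n - 1 - v.val)), ∃ x : Fin n, (x < u ∨ v < x) ∧
      x.val = if i.val < u.val then i.val else i.val - u.val + v.val + 1 := by
    intro i
    have hi := i.isLt
    by_cases hiu : i.val < u.val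
    · exact ⟨⟨i.val, by omega⟩, Or.inl hiu, by simp [hiu]⟩
    · refine ⟨⟨i.val - u.val + v.val + 1, by omega⟩, Or.inr ?_, by simp [hiu]⟩
      rw [Fin.lt_def]; dsimp only; omega
  choose g hg1 hg2 using key
  have := Fintype.card_le_of_injective (fun i => c (g i)) (by
      intro i j hij
      have := h _ _ (hg1 i) (hg1 j) hij
      have h1 := hg2 i
      have h2 := hg2 j
      rw [this] at h1
      ext
      split_ifs at h1 h2 <;> omega)
  simpa using this

/-- In a rainbow coloring with few colors, close vertices have different colors. -/
theorem Rain.far {n k L : ℕ} {c : Fin n → Fin k} (h : Rain c) (hL : k + L + 3 ≤ n)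
    {x y : Fin n} (hxy : x < y) (hc : c x = c y) :
    L ≤ y.val - x.val ∧ L ≤ n - (y.val - x.val) := by
  have hy := y.isLt
  have hxy' : x.val < y.val := hxy
  have H : ∀ u v : ℕ, ∀ (hv : v < n) (huv : u < v),
      (n - 1 + u = v + L ∧ (x.val < u ∨ v < x.val) ∧ (y.val < u ∨ v < y.val)) ∨
      (v = u + L + 1 ∧ u < x.val ∧ y.val < v) → False := by
    intro u v hv huv hcase
    rcases h ⟨u, by omega⟩ ⟨v, hv⟩ huv with h1 | h1
    · rcases hcase with ⟨ha, hb, hd⟩ | ⟨ha, hb, hd⟩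
      · have := inside_card _ _ _ h1
        dsimp only at this
        omega
      · exact hxy.ne (h1 x y hb (by rw [Fin.lt_def]; dsimp only; omega)
          (by rw [Fin.lt_def]; dsimp only; omega) hd hc)
    · rcases hcase with ⟨ha, hb, hd⟩ | ⟨ha, hb, hd⟩
      · exact hxy.ne (h1 x y hb hd hc)
      · have := outside_card _ _ _ huv h1
        dsimp only at this
        omega
  constructor
  · by_contra hlt
    rcases Nat.eq_zero_or_pos x.val with h0 | h0
    · exact H L (n - 1) (by omega) (by omega) (by omega)
    · rcases Nat.lt_or_ge (x.val + L) n with h2 | h2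
      · exact H (x.val - 1) (x.val + L) (by omega) (by omega) (by omega)
      · exact H (x.val + L - n) (x.val - 1) (by omega) (by omega) (by omega)
  · by_contra hlt
    exact H (y.val + L - n) (y.val - 1) (by omega) (by omega) (by omega)

theorem not_rain {n k L : ℕ} (c : Fin n → Fin k) (hL : k + L + 3 ≤ n) (h3 : n < 3 * L)
    (h2 : 2 * k < n) : ¬ Rain c := by
  intro h
  obtain ⟨i, hi⟩ := Fintype.exists_lt_card_fiber_of_mul_lt_card (n := 2) c (by simp; omega)
  rw [Finset.two_lt_card] at hi
  obtain ⟨x, hx, y, hy, z, hz, hxy, hxz, hyz⟩ := hi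
  simp only [Finset.mem_filter, Finset.mem_univ, true_and] at hx hy hz
  have key : ∀ x y : Fin n, c x = i → c y = i → x ≠ y →
      (x.val < y.val ∧ L ≤ y.val - x.val ∧ L ≤ n - (y.val - x.val)) ∨
      (y.val < x.val ∧ L ≤ x.val - y.val ∧ L ≤ n - (x.val - y.val)) := by
    intro x y hx hy hne
    rcases lt_or_gt_of_ne hne with h1 | h1
    · exact Or.inl ⟨h1, h.far hL h1 (hx.trans hy.symm)⟩
    · exact Or.inr ⟨h1, h.far hL h1 (hy.trans hx.symm)⟩
  have a1 := key x y hx hy hxy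
  have a2 := key x z hx hz hxz
  have a3 := key y z hy hz hyz
  have := x.isLt
  have := y.isLt
  have := z.isLt
  omega

theorem locating_comp {V : Type*} {G : SimpleGraph V} {k k' : ℕ} (g : Fin k → Fin k')
    (hg : Function.Injective g) (c : V → Fin k)
    (h : IsLocatingRainbowColoring G c) :
    IsLocatingRainbowColoring G (fun v => g (c v)) := by
  refine ⟨?_, ?_⟩
  · intro u v huv
    obtain ⟨p, hp, hnd⟩ := h.1 u v huv
    refine ⟨p, hp, ?_⟩
    have := hnd.map hg
    rwa [List.map_map] at this
  · intro u v huv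
    apply h.2
    funext i
    have := congrFun huv (g i)
    simpa [rainbowCode, distToColor, hg.eq_iff] using this

theorem rvcl_eq {V : Type*} {G : SimpleGraph V} {k : ℕ} (c : V → Fin (k + 1))
    (h : IsLocatingRainbowColoring G c) (h' : ∀ c : V → Fin k, ¬ IsLocatingRainbowColoring G c) :
    rvcl G = k + 1 := by
  apply le_antisymm
  · exact Nat.sInf_le ⟨c, h⟩
  · refine le_csInf ⟨_, c, h⟩ ?_
    rintro m ⟨d, hd⟩
    by_contra hlt
    exact h' _ (locating_comp _ (Fin.castLE_injective (by omega)) d hd)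

/-- Minimum of a list, with value `0` for the empty list. -/
def minD : List ℕ → ℕ
  | [] => 0
  | [a] => a
  | a :: b :: l => min a (minD (b :: l))

theorem minD_eq (l : List ℕ) : sInf {m | m ∈ l} = minD l := by
  rcases l with _ | ⟨a, l⟩
  · simp [minD]
  have h : minD (a :: l) ∈ a :: l ∧ ∀ m ∈ a :: l, minD (a :: l) ≤ m := by
    induction l generalizing a with
    | nil => simp [minD]
    | cons b l ih =>
      obtain ⟨h1, h2⟩ := ih b
      constructor
      · rw [minD]
        rcases min_choice a (minD (b :: l)) with h | h <;> rw [h]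
        · simp
        · exact List.mem_cons_of_mem _ h1
      · intro m hm
        rw [minD]
        rcases List.mem_cons.mp hm with rfl | hm
        · exact min_le_left _ _
        · exact (min_le_right _ _).trans (h2 m hm)
  apply le_antisymm
  · exact Nat.sInf_le h.1
  · exact le_csInf ⟨_, h.1⟩ h.2

/-- Computable rainbow code. -/
def codeC (n k : ℕ) (f : ℕ → ℕ) (v : ℕ) : List ℕ :=
  (List.range k).map fun i =>
    minD (((List.range n).filter fun y => Nat.beq (f y) i).map fun y => cd n v y)

/-- Computable check for pairwise distinct entries. -/
def nd : List ℕ → Bool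
  | [] => true
  | a :: l => (l.all fun b => !(Nat.beq a b)) && nd l

theorem nd_iff (l : List ℕ) : nd l = true ↔ l.Nodup := by
  induction l with
  | nil => simp [nd]
  | cons a l ih =>
    rw [nd, Bool.and_eq_true, ih, List.nodup_cons, List.all_eq_true]
    refine and_congr_left fun _ => ⟨fun h h' => ?_, fun h b hb => ?_⟩
    · simpa using h a h'
    · have : a ≠ b := fun e => h (e ▸ hb)
      rw [Ne, ← Nat.beq_eq, Bool.not_eq_true] at this
      rw [this]
      rfl

/-- Computable rainbow check. -/
def rainC (n : ℕ) (f : ℕ → ℕ) : Bool :=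
  (List.range n).all fun v => (List.range v).all fun u =>
    nd ((List.range' (u + 1) (v - (u + 1))).map f) ||
    nd ((List.range u ++ List.range' (v + 1) (n - (v + 1))).map f)

/-- Computable injectivity check. -/
def injC (n k : ℕ) (f : ℕ → ℕ) : Bool :=
  (List.range n).all fun v => (List.range v).all fun u =>
    !(decide (codeC n k f u = codeC n k f v))

/-- Computable check for locating rainbow colorings. -/
def good (n k : ℕ) (f : ℕ → ℕ) : Bool := rainC n f && injC n k f

theorem nodup_map_iff {f : ℕ → ℕ} {l : List ℕ} (hl : l.Nodup) :
    (l.map f).Nodup ↔ ∀ x ∈ l, ∀ y ∈ l, f x = f y → x = y :=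
  List.nodup_map_iff_inj_on hl

theorem rainC_iff {n k : ℕ} (c : Fin n → Fin k) (f : ℕ → ℕ)
    (hf : ∀ i : Fin n, f i.val = (c i).val) : rainC n f = true ↔ Rain c := by
  have hf' : ∀ x y : Fin n, c x = c y ↔ f x.val = f y.val := by
    intro x y; rw [hf, hf, Fin.ext_iff]
  unfold rainC Rain
  simp only [List.all_eq_true, List.mem_range, Bool.or_eq_true, nd_iff]
  constructor
  · intro h u v huv
    have huv' : u.val < v.val := huv
    have hv := v.isLt
    refine (h v.val v.isLt u.val huv).imp ?_ ?_
    · intro h1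
      rw [nodup_map_iff List.nodup_range'] at h1
      intro x y hx1 hx2 hy1 hy2 hxy
      rw [Fin.lt_def] at *
      ext
      refine h1 x.val ?_ y.val ?_ ((hf' x y).mp hxy) <;> rw [List.mem_range'_1] <;> omega
    · intro h1
      rw [nodup_map_iff ?_] at h1
      · intro x y hx hy hxy
        rw [Fin.lt_def, Fin.lt_def] at *
        ext
        refine h1 x.val ?_ y.val ?_ ((hf' x y).mp hxy) <;>
          rw [List.mem_append, List.mem_range, List.mem_range'_1] <;> omega
      · refine List.Nodup.append List.nodup_range List.nodup_range' ?_
        intro a ha hb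
        rw [List.mem_range] at ha
        rw [List.mem_range'_1] at hb
        omega
  · intro h v hv u huv
    refine (h ⟨u, by omega⟩ ⟨v, hv⟩ huv).imp ?_ ?_
    · intro h1
      rw [nodup_map_iff List.nodup_range']
      intro x hx y hy hxy
      rw [List.mem_range'_1] at hx hy
      have := h1 ⟨x, by omega⟩ ⟨y, by omega⟩ (by rw [Fin.lt_def]; dsimp only; omega)
        (by rw [Fin.lt_def]; dsimp only; omega) (by rw [Fin.lt_def]; dsimp only; omega)
        (by rw [Fin.lt_def]; dsimp only; omega) ((hf' _ _).mpr hxy)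
      simpa using this
    · intro h1
      rw [nodup_map_iff ?_]
      · intro x hx y hy hxy
        rw [List.mem_append, List.mem_range, List.mem_range'_1] at hx hy
        have := h1 ⟨x, by omega⟩ ⟨y, by omega⟩ (by rw [Fin.lt_def, Fin.lt_def]; dsimp only; omega)
          (by rw [Fin.lt_def, Fin.lt_def]; dsimp only; omega) ((hf' _ _).mpr hxy)
        simpa using this
      · refine List.Nodup.append List.nodup_range List.nodup_range' ?_
        intro a ha hb
        rw [List.mem_range] at ha
        rw [List.mem_range'_1] at hb
        omega

theorem distToColor_eq {n k : ℕ} (hn : 3 ≤ n) (c : Fin n → Fin k) (f : ℕ → ℕ)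
    (hf : ∀ i : Fin n, f i.val = (c i).val) (v : Fin n) (i : Fin k) :
    distToColor (cycleGraph n) c v i =
      minD (((List.range n).filter fun y => Nat.beq (f y) i.val).map fun y => cd n v.val y) := by
  rw [← minD_eq, distToColor]
  congr 1
  ext m
  simp only [Set.mem_ofPred_eq, List.mem_map, List.mem_filter, List.mem_range, dist_eq hn,
    Nat.beq_eq]
  constructor
  · rintro ⟨y, rfl, rfl⟩
    exact ⟨y.val, ⟨y.isLt, hf y⟩, rfl⟩
  · rintro ⟨y, ⟨hy, hc⟩, rfl⟩
    refine ⟨⟨y, hy⟩, ?_, rfl⟩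
    ext
    rw [← hf]
    exact hc

theorem code_eq_iff {n k : ℕ} (hn : 3 ≤ n) (c : Fin n → Fin k) (f : ℕ → ℕ)
    (hf : ∀ i : Fin n, f i.val = (c i).val) (u v : Fin n) :
    rainbowCode (cycleGraph n) c u = rainbowCode (cycleGraph n) c v ↔
      codeC n k f u.val = codeC n k f v.val := by
  unfold codeC rainbowCode
  rw [List.map_inj_left, funext_iff]
  simp only [distToColor_eq hn c f hf, List.mem_range]
  exact ⟨fun h i hi => h ⟨i, hi⟩, fun h i => h i.val i.isLt⟩

theorem good_iff {n k : ℕ} (hn : 3 ≤ n) (c : Fin n → Fin k) (f : ℕ → ℕ)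
    (hf : ∀ i : Fin n, f i.val = (c i).val) :
    IsLocatingRainbowColoring (cycleGraph n) c ↔ good n k f = true := by
  unfold IsLocatingRainbowColoring good
  rw [rainbow_iff hn, Bool.and_eq_true, rainC_iff c f hf]
  refine and_congr_right fun _ => ?_
  unfold injC
  simp only [List.all_eq_true, List.mem_range, Bool.not_eq_true', decide_eq_false_iff_not]
  constructor
  · intro h v hv u hu he
    have := h ((code_eq_iff hn c f hf ⟨u, by omega⟩ ⟨v, hv⟩).mpr he)
    simp at this
    omega
  · intro h u v he
    rw [code_eq_iff hn c f hf] at he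
    rcases lt_trichotomy u v with h1 | h1 | h1
    · exact absurd he (h v.val v.isLt u.val h1)
    · exact h1
    · exact absurd he.symm (h u.val u.isLt v.val h1)

/-- Backtracking search showing that no good coloring exists. -/
def search (n k L : ℕ) : ℕ → List ℕ → Bool
  | 0, pre => !(good n k fun j => pre.getD j 0)
  | m + 1, pre => (List.range k).all fun a =>
      ((pre.take (L - 1)).any fun b => Nat.beq b a) || search n k L m (a :: pre)

theorem search_sound {n k L : ℕ} (f : ℕ → ℕ) (hfk : ∀ i < n, f i < k)
    (hw : ∀ x y, x < y → y < n → y < x + L → f x ≠ f y) (m : ℕ) (hm : m ≤ n)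
    (h : search n k L m ((List.range' m (n - m)).map f) = true) :
    good n k (fun j => ((List.range' 0 n).map f).getD j 0) = false := by
  induction m with
  | zero => simpa [search] using h
  | succ m ih =>
    apply ih (by omega)
    rw [search, List.all_eq_true] at h
    have := h (f m) (by rw [List.mem_range]; exact hfk m (by omega))
    rw [Bool.or_eq_true] at this
    rcases this with h1 | h1
    · exfalso
      rw [← List.map_take, List.any_eq_true] at h1
      obtain ⟨b, hb, hb'⟩ := h1
      rw [List.mem_map] at hb
      obtain ⟨j, hj, rfl⟩ := hb
      rw [Nat.beq_eq] at hb'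
      have hj' : m < j ∧ j < n ∧ j < m + L := by
        rw [List.mem_take_iff_getElem] at hj
        obtain ⟨i, hi, rfl⟩ := hj
        rw [List.length_range'] at hi
        rw [List.getElem_range']
        omega
      exact hw m j hj'.1 hj'.2.1 hj'.2.2 hb'.symm
    · rw [show n - m = n - (m + 1) + 1 by omega, List.range'_succ, List.map_cons]
      exact h1

/-- A coloring as a function on natural numbers. -/
def ext {n k : ℕ} (c : Fin n → Fin k) (j : ℕ) : ℕ := if hj : j < n then (c ⟨j, hj⟩).val else 0

theorem not_locating_of_search {n k L : ℕ} (hn : 3 ≤ n) (hL : k + L + 3 ≤ n ∨ L ≤ 1)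
    (c : Fin n → Fin k) (m : ℕ) (hm : m ≤ n)
    (h : search n k L m ((List.range' m (n - m)).map (ext c)) = true) :
    ¬ IsLocatingRainbowColoring (cycleGraph n) c := by
  intro hc
  let f : ℕ → ℕ := ext c
  have hf : ∀ i (hi : i < n), f i = (c ⟨i, hi⟩).val := by
    intro i hi; simp [f, ext, hi]
  have hs := search_sound (n := n) (k := k) (L := L) f (by
    intro i hi; rw [hf i hi]; exact Fin.isLt _) (by
    intro x y hxy hy hyL he
    rcases hL with hL | hL
    · rw [hf x (by omega), hf y hy] at he
      have hr := (rainbow_iff hn c).mp hc.1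
      have := hr.far hL (x := ⟨x, by omega⟩) (y := ⟨y, hy⟩) hxy (Fin.ext he)
      dsimp only at this
      omega
    · omega) m hm h
  rw [good_iff hn c (fun j => ((List.range' 0 n).map f).getD j 0) (by
    intro i
    rw [List.getD_eq_getElem _ _ (by simp)]
    simp [hf])] at hc
  rw [hs] at hc
  exact absurd hc (by decide)

theorem exists_of_list {n k : ℕ} (hn : 3 ≤ n) (l : List ℕ)
    (h1 : (List.range n).all (fun j => Nat.blt (l.getD j 0) k) = true)
    (h : good n k (fun j => l.getD j 0) = true) :
    ∃ c : Fin n → Fin k, IsLocatingRainbowColoring (cycleGraph n) c := by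
  rw [List.all_eq_true] at h1
  refine ⟨fun i => ⟨l.getD i.val 0, ?_⟩, ?_⟩
  · have := h1 i.val (by simp)
    simpa [Nat.blt] using this
  · rw [good_iff hn _ (fun j => l.getD j 0) (fun i => rfl)]
    exact h

theorem no_3_2 : search 3 2 1 3 [] = true := by decide +kernel
theorem no_4_2 : search 4 2 1 4 [] = true := by decide +kernel
theorem no_5_2 : search 5 2 1 5 [] = true := by decide +kernel
theorem no_6_2 : search 6 2 1 6 [] = true := by decide +kernel
theorem no_7_2 : search 7 2 2 7 [] = true := by decide +kernel
theorem no_8_3 : search 8 3 2 6 [0, 1] = true := by decide +kernel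
theorem no_9_3 : search 9 3 3 9 [] = true := by decide +kernel
theorem no_10_4 : search 10 4 3 7 [0, 1, 2] = true := by decide +kernel

theorem perm4 : ∀ a b d : Fin 4, a ≠ b → a ≠ d → b ≠ d →
    ∃ s : Equiv.Perm (Fin 4), s a = 0 ∧ s b = 1 ∧ s d = 2 := by decide

theorem lower_10 (c : Fin 10 → Fin 4) : ¬ IsLocatingRainbowColoring (cycleGraph 10) c := by
  intro hc
  have hr := (rainbow_iff (by norm_num) c).mp hc.1
  have key : ∀ x y : Fin 10, x < y → y.val - x.val < 3 → c x ≠ c y := by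
    intro x y hxy h3 he
    have := hr.far (L := 3) (by norm_num) hxy he
    omega
  obtain ⟨s, h0, h1, h2⟩ := perm4 (c 7) (c 8) (c 9) (key 7 8 (by decide) (by decide))
    (key 7 9 (by decide) (by decide)) (key 8 9 (by decide) (by decide))
  have hc' := locating_comp s s.injective c hc
  refine not_locating_of_search (L := 3) (by norm_num) (by norm_num) _ 7 (by norm_num) ?_ hc'
  have e : (List.range' 7 (10 - 7)).map (ext fun v => s (c v)) = [0, 1, 2] := by
    have e7 : ext (fun v => s (c v)) 7 = 0 := congrArg Fin.val h0
    have e8 : ext (fun v => s (c v)) 8 = 1 := congrArg Fin.val h1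
    have e9 : ext (fun v => s (c v)) 9 = 2 := congrArg Fin.val h2
    simp [List.range', e7, e8, e9]
  rw [e]
  exact no_10_4

theorem perm3 : ∀ a b : Fin 3, a ≠ b →
    ∃ s : Equiv.Perm (Fin 3), s a = 0 ∧ s b = 1 := by decide

theorem lower_8 (c : Fin 8 → Fin 3) : ¬ IsLocatingRainbowColoring (cycleGraph 8) c := by
  intro hc
  have hr := (rainbow_iff (by norm_num) c).mp hc.1
  have key : c 6 ≠ c 7 := by
    intro he
    have := hr.far (L := 2) (by norm_num) (show (6 : Fin 8) < 7 by decide) he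
    revert this
    decide
  obtain ⟨s, h0, h1⟩ := perm3 (c 6) (c 7) key
  have hc' := locating_comp s s.injective c hc
  refine not_locating_of_search (L := 2) (by norm_num) (by norm_num) _ 6 (by norm_num) ?_ hc'
  have e : (List.range' 6 (8 - 6)).map (ext fun v => s (c v)) = [0, 1] := by
    have e6 : ext (fun v => s (c v)) 6 = 0 := congrArg Fin.val h0
    have e7 : ext (fun v => s (c v)) 7 = 1 := congrArg Fin.val h1
    simp [List.range', e6, e7]
  rw [e]
  exact no_8_3

theorem lower_search {n k L : ℕ} (hn : 3 ≤ n) (hL : k + L + 3 ≤ n ∨ L ≤ 1)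
    (h : search n k L n [] = true) (c : Fin n → Fin k) :
    ¬ IsLocatingRainbowColoring (cycleGraph n) c :=
  not_locating_of_search hn hL c n le_rfl (by simpa using h)

theorem lower_count {n k L : ℕ} (hn : 3 ≤ n) (hL : k + L + 3 ≤ n) (h3 : n < 3 * L)
    (h2 : 2 * k < n) (c : Fin n → Fin k) : ¬ IsLocatingRainbowColoring (cycleGraph n) c :=
  fun hc => not_rain c hL h3 h2 ((rainbow_iff hn c).mp hc.1)

theorem rvcl_small {n k : ℕ} (hn : 3 ≤ n) (l : List ℕ)
    (h1 : (List.range n).all (fun j => Nat.blt (l.getD j 0) (k + 1)) = true)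
    (h : good n (k + 1) (fun j => l.getD j 0) = true)
    (h' : ∀ c : Fin n → Fin k, ¬ IsLocatingRainbowColoring (cycleGraph n) c) :
    rvcl (cycleGraph n) = k + 1 := by
  obtain ⟨c, hc⟩ := exists_of_list hn l h1 h
  exact rvcl_eq c hc h'

theorem r3 : rvcl (cycleGraph 3) = 3 :=
  rvcl_small (by norm_num) [0, 1, 2] (by decide +kernel) (by decide +kernel)
    (lower_search (L := 1) (by norm_num) (by norm_num) no_3_2)
theorem r4 : rvcl (cycleGraph 4) = 3 :=
  rvcl_small (by norm_num) [0, 0, 1, 2] (by decide +kernel) (by decide +kernel)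
    (lower_search (L := 1) (by norm_num) (by norm_num) no_4_2)
theorem r5 : rvcl (cycleGraph 5) = 3 :=
  rvcl_small (by norm_num) [0, 0, 0, 1, 2] (by decide +kernel) (by decide +kernel)
    (lower_search (L := 1) (by norm_num) (by norm_num) no_5_2)
theorem r6 : rvcl (cycleGraph 6) = 3 :=
  rvcl_small (by norm_num) [0, 0, 0, 0, 1, 2] (by decide +kernel) (by decide +kernel)
    (lower_search (L := 1) (by norm_num) (by norm_num) no_6_2)
theorem r7 : rvcl (cycleGraph 7) = 3 :=
  rvcl_small (by norm_num) [0, 0, 0, 1, 0, 2, 1] (by decide +kernel) (by decide +kernel)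
    (lower_search (L := 2) (by norm_num) (by norm_num) no_7_2)
theorem r9 : rvcl (cycleGraph 9) = 4 :=
  rvcl_small (by norm_num) [0, 1, 0, 1, 2, 1, 0, 3, 2] (by decide +kernel) (by decide +kernel)
    (lower_search (L := 3) (by norm_num) (by norm_num) no_9_3)
theorem r11 : rvcl (cycleGraph 11) = 5 :=
  rvcl_small (by norm_num) [0, 1, 2, 0, 1, 3, 0, 1, 2, 4, 3] (by decide +kernel)
    (by decide +kernel)
    (lower_count (L := 4) (by norm_num) (by norm_num) (by norm_num) (by norm_num))
theorem r12 : rvcl (cycleGraph 12) = 5 :=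
  rvcl_small (by norm_num) [0, 1, 2, 3, 0, 1, 4, 2, 0, 1, 3, 4] (by decide +kernel)
    (by decide +kernel)
    (lower_count (L := 5) (by norm_num) (by norm_num) (by norm_num) (by norm_num))
theorem r13 : rvcl (cycleGraph 13) = 6 :=
  rvcl_small (by norm_num) [0, 1, 2, 3, 0, 1, 4, 2, 0, 1, 3, 5, 4] (by decide +kernel)
    (by decide +kernel)
    (lower_count (L := 5) (by norm_num) (by norm_num) (by norm_num) (by norm_num))
theorem r15 : rvcl (cycleGraph 15) = 7 :=
  rvcl_small (by norm_num) [0, 1, 2, 3, 4, 0, 5, 1, 6, 2, 0, 3, 4, 5, 6] (by decide +kernel)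
    (by decide +kernel)
    (lower_count (L := 6) (by norm_num) (by norm_num) (by norm_num) (by norm_num))

/-- The general coloring. -/
def gc (k p : ℕ) : ℕ :=
  if p < k then p else if p = k then 1 else if p = k + 1 then 0 else p - k

theorem gc_lt {n k p : ℕ} (hk : 4 ≤ k) (hn : n = 2 * k ∨ n + 1 = 2 * k) (hp : p < n) :
    gc k p < k := by
  unfold gc; split_ifs <;> omega

theorem distToColor_lt {n k : ℕ} (hn : 3 ≤ n) (c : Fin n → Fin k) (u v : Fin n) (i : Fin k)
    (y : Fin n) (hy : c y = i) (h : ∀ z, c z = i → cd n u.val y.val < cd n v.val z.val) :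
    rainbowCode (cycleGraph n) c u ≠ rainbowCode (cycleGraph n) c v := by
  intro he
  have he' := congrFun he i
  simp only [rainbowCode] at he'
  have h1 : distToColor (cycleGraph n) c u i ≤ cd n u.val y.val :=
    Nat.sInf_le ⟨y, hy, dist_eq hn u y⟩
  have h2 : distToColor (cycleGraph n) c v i ∈
      {m | ∃ y, c y = i ∧ (cycleGraph n).dist v y = m} := Nat.sInf_mem ⟨_, y, hy, rfl⟩
  obtain ⟨z, hz, hz'⟩ := h2
  rw [dist_eq hn] at hz'
  have := h z hz
  omega

theorem upper {n k : ℕ} (hk : 4 ≤ k) (hn : n = 2 * k ∨ (n + 1 = 2 * k ∧ 5 ≤ k)) :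
    ∃ c : Fin n → Fin k, IsLocatingRainbowColoring (cycleGraph n) c := by
  have hn3 : 3 ≤ n := by omega
  let c : Fin n → Fin k := fun p => ⟨gc k p.val, gc_lt hk (hn.imp_right And.left) p.isLt⟩
  have hc : ∀ p, (c p).val = gc k p.val := fun p => rfl
  have same : ∀ x y : Fin n, x < y → c x = c y →
      (2 ≤ x.val ∧ x.val < k ∧ y.val = x.val + k) ∨ (x.val = 0 ∧ y.val = k + 1) ∨
      (x.val = 1 ∧ y.val = k) := by
    intro x y hxy he
    have he' : gc k x.val = gc k y.val := congrArg Fin.val he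
    have hxy' : x.val < y.val := hxy
    have := y.isLt
    unfold gc at he'
    split_ifs at he' <;> omega
  have codes : ∀ x y : Fin n, x < y →
      rainbowCode (cycleGraph n) c x ≠ rainbowCode (cycleGraph n) c y := by
    intro x y hxy
    have hxy' : x.val < y.val := hxy
    have hy := y.isLt
    by_cases he : c x = c y
    · rcases same x y hxy he with h | h | h
      · rcases le_total (x.val - 1) (n - y.val) with h' | h'
        · refine (distToColor_lt hn3 c y x ⟨0, by omega⟩ ⟨k + 1, by omega⟩ ?_ ?_).symm
          · ext; simp [hc, gc]
          · intro z hz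
            have hz' : gc k z.val = 0 := congrArg Fin.val hz
            have := z.isLt
            have : z.val = 0 ∨ z.val = k + 1 := by
              unfold gc at hz'
              split_ifs at hz' <;> omega
            unfold cd
            dsimp only
            omega
        · refine (distToColor_lt hn3 c y x ⟨0, by omega⟩ ⟨0, by omega⟩ ?_ ?_).symm
          · ext; simp [hc, gc]; omega
          · intro z hz
            have hz' : gc k z.val = 0 := congrArg Fin.val hz
            have := z.isLt
            have : z.val = 0 ∨ z.val = k + 1 := by
              unfold gc at hz'
              split_ifs at hz' <;> omega
            unfold cd
            dsimp only
            omega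
      · refine (distToColor_lt hn3 c y x ⟨2, by omega⟩ ⟨k + 2, by omega⟩ ?_ ?_).symm
        · ext; simp [hc, gc]
        · intro z hz
          have hz' : gc k z.val = 2 := congrArg Fin.val hz
          have := z.isLt
          have : z.val = 2 ∨ z.val = k + 2 := by
            unfold gc at hz'
            split_ifs at hz' <;> omega
          unfold cd
          dsimp only
          omega
      · refine distToColor_lt hn3 c x y ⟨2, by omega⟩ ⟨2, by omega⟩ ?_ ?_
        · ext; simp [hc, gc]; omega
        · intro z hz
          have hz' : gc k z.val = 2 := congrArg Fin.val hz
          have := z.isLt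
          have : z.val = 2 ∨ z.val = k + 2 := by
            unfold gc at hz'
            split_ifs at hz' <;> omega
          unfold cd
          dsimp only
          omega
    · refine distToColor_lt hn3 c x y (c x) x rfl ?_
      intro z hz
      have hzy : z.val ≠ y.val := fun e => he (by rw [← hz, Fin.ext e])
      have := z.isLt
      unfold cd
      omega
  refine ⟨c, ?_, ?_⟩
  · rw [rainbow_iff hn3]
    intro u v huv
    have huv' : u.val < v.val := huv
    have hv := v.isLt
    have same' : ∀ x y : Fin n, x < y → c x = c y → x.val + k ≤ y.val + 1 ∧
        y.val ≤ x.val + k + 1 ∧ (y.val = x.val + k + 1 → x.val = 0) ∧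
        (y.val + 1 = x.val + k → x.val = 1) := by
      intro x y hxy he
      have := same x y hxy he
      omega
    rcases Nat.lt_or_ge (v.val - u.val) (k + 1) with h | h
    · left
      have main : ∀ x y : Fin n, x < y → u < x → y < v → c x ≠ c y := by
        intro x y h1 h2 h3 he
        rw [Fin.lt_def] at h2 h3
        have := same x y h1 he
        omega
      intro x y h1 h2 h3 h4 he
      rcases lt_trichotomy x y with h5 | h5 | h5
      · exact absurd he (main x y h5 h1 h4)
      · exact h5
      · exact absurd he.symm (main y x h5 h3 h2)
    · right
      have main : ∀ x y : Fin n, x < y → (x < u ∨ v < x) → (y < u ∨ v < y) → c x ≠ c y := by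
        intro x y h1 h2 h3 he
        rw [Fin.lt_def, Fin.lt_def] at h2 h3
        have := same x y h1 he
        have := y.isLt
        omega
      intro x y h1 h2 he
      rcases lt_trichotomy x y with h5 | h5 | h5
      · exact absurd he (main x y h5 h1 h2)
      · exact h5
      · exact absurd he.symm (main y x h5 h2 h1)
  · intro x y he
    rcases lt_trichotomy x y with h5 | h5 | h5
    · exact absurd he (codes x y h5)
    · exact h5
    · exact absurd he.symm (codes y x h5)

theorem rvcl_general {n k : ℕ} (hk : 3 ≤ k) (hn : n = 2 * (k + 1) ∨ (n = 2 * k + 1 ∧ 4 ≤ k))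
    (h' : ∀ c : Fin n → Fin k, ¬ IsLocatingRainbowColoring (cycleGraph n) c) :
    rvcl (cycleGraph n) = k + 1 := by
  obtain ⟨c, hc⟩ := upper (n := n) (k := k + 1) (by omega) (by omega)
  exact rvcl_eq c hc h'

theorem r8 : rvcl (cycleGraph 8) = 4 :=
  rvcl_general (by norm_num) (by norm_num)
    lower_8

theorem r10 : rvcl (cycleGraph 10) = 5 :=
  rvcl_general (by norm_num) (by norm_num) lower_10

theorem rbig {n : ℕ} (h : n = 14 ∨ 16 ≤ n) : rvcl (cycleGraph n) = (n + 1) / 2 := by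
  obtain ⟨k, hk⟩ : ∃ k, (n + 1) / 2 = k + 1 := ⟨(n + 1) / 2 - 1, by omega⟩
  rw [hk]
  exact rvcl_general (by omega) (by omega)
    (lower_count (L := n - k - 3) (by omega) (by omega) (by omega) (by omega))

end LocatingRainbow

open LocatingRainbow SimpleGraph in
/-- For every integer `n ≥ 3`, the cycle graph `C_n` satisfies: `rvcl(C_n) = 3` for
`3 ≤ n ≤ 7`; `rvcl(C_n) = ⌈n/2⌉ - 1` for `n ∈ {9, 15}` or `11 ≤ n ≤ 13`; and
`rvcl(C_n) = ⌈n/2⌉` for `n ∈ {8, 10, 14}` or `n ≥ 16`. -/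
theorem rvcl_cycleGraph (n : ℕ) (hn : 3 ≤ n) :
    (3 ≤ n ∧ n ≤ 7 → rvcl (cycleGraph n) = 3) ∧
    (n = 9 ∨ n = 15 ∨ (11 ≤ n ∧ n ≤ 13) → rvcl (cycleGraph n) = (n + 1) / 2 - 1) ∧
    (n = 8 ∨ n = 10 ∨ n = 14 ∨ 16 ≤ n → rvcl (cycleGraph n) = (n + 1) / 2) := by
  refine ⟨?_, ?_, ?_⟩
  · rintro ⟨h1, h2⟩
    interval_cases n
    · exact r3
    · exact r4
    · exact r5
    · exact r6
    · exact r7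
  · rintro (rfl | rfl | ⟨h1, h2⟩)
    · exact r9
    · exact r15
    · interval_cases n
      · exact r11
      · exact r12
      · exact r13
  · rintro (rfl | rfl | h)
    · exact r8
    · exact r10
    · exact rbig h
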